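/- Let Y^A be a conformal Killing field on an open set U ⊂ S^2, f a smooth function compactly supported in U, C_{AB} a smooth symmetric traceless 2-tensor on S^2, F_{AB} = 2∇_A∇_B f - (Δf)σ_{AB}, and P_{BA} = ∇_B∇^E C_{EA} - ∇_A∇^E C_{EB}. Then (1/4)∫_U Y^A [C_{AB}∇_D F^{BD} + F_{AB}∇_D C^{BD} + (1/2)∇_A(C_{BD}F^{BD}) - f∇^B P_{BA} - 3P_{BA}∇^B f] = -(1/4)∫_U f ∇^A∇^B(∇_C Y^C) C_{AB}. -/

import Mathlib

/-!
In the stereographic chart the metric is `φ δ` with `λ = φ⁻¹`, and on `U` both `Y` and its rotation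
`J Y` are conformal Killing fields. Integration by parts turns the terms in `F` into the pairing of
`F` with the rotated tensor `J m`, where `m = 2 L_{JY} C - (∇·JY) C`. Since `f ↦ F` is adjoint to
the double divergence, this pairing is the integral of `f` against the curl `p(m)` of the divergence
of `m`. Conformal covariance of that operator gives, with `μ = ∇·JY`,
`p(m) = 2 ∂·(P JY) + μ P + (J C) · S(λ ∂μ)`, where `S` is the conformal Killing operator; the first
two terms cancel the terms in `P`. Finally, constant curvature `K` gives
`λ (∂ (∇·Y) - J ∂ (∇·JY)) = -2 K Y` up to derivatives of `S Y`, so `S(λ ∂(∇·Y)) = J S(λ ∂μ)` on `U`.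
-/

open MeasureTheory Real
noncomputable section

/-- Points of the stereographic chart of the round unit sphere `S²`
(the chart covers `S²` minus the north pole). -/
abbrev Pt := Fin 2 → ℝ

/-- Partial derivative `∂_a f`. -/
def pd (a : Fin 2) (f : Pt → ℝ) (x : Pt) : ℝ := fderiv ℝ f x (Pi.single a 1)

/-- The round (unit sphere) metric `σ_{AB}` in stereographic coordinates. -/
def rnd (x : Pt) (a b : Fin 2) : ℝ :=
  (4 / (1 + x 0 ^ 2 + x 1 ^ 2) ^ 2) * (if a = b then 1 else 0)

/-- The inverse round metric `σ^{AB}`. -/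
def rndInv (x : Pt) (a b : Fin 2) : ℝ :=
  ((1 + x 0 ^ 2 + x 1 ^ 2) ^ 2 / 4) * (if a = b then 1 else 0)

/-- The area form `ε_{AB}` of the round metric. -/
def rndE (x : Pt) (a b : Fin 2) : ℝ :=
  (4 / (1 + x 0 ^ 2 + x 1 ^ 2) ^ 2) *
    (if a = 0 ∧ b = 1 then 1 else if a = 1 ∧ b = 0 then -1 else 0)

/-- The area form with raised indices `ε^{AB}`. -/
def rndEUp (x : Pt) (a b : Fin 2) : ℝ :=
  ∑ c, ∑ d, rndInv x a c * rndInv x b d * rndE x c d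

/-- Christoffel symbols `Γ^c_{ab}` of the round metric. -/
def Gam (c a b : Fin 2) (x : Pt) : ℝ :=
  (1/2) * ∑ d, rndInv x c d *
    (pd a (fun y => rnd y d b) x + pd b (fun y => rnd y d a) x - pd d (fun y => rnd y a b) x)

/-- Covariant derivative `∇_a Y^b` of a vector field. -/
def cdVec (Y : Pt → Fin 2 → ℝ) (x : Pt) (a b : Fin 2) : ℝ :=
  pd a (fun y => Y y b) x + ∑ c, Gam b a c x * Y x c

/-- Covariant derivative `∇_a ω_b` of a covector field. -/
def cdCov (ω : Pt → Fin 2 → ℝ) (x : Pt) (a b : Fin 2) : ℝ :=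
  pd a (fun y => ω y b) x - ∑ c, Gam c a b x * ω x c

/-- Covariant derivative `∇_a T_{bc}` of a (0,2)-tensor. -/
def cdT2 (T : Pt → Fin 2 → Fin 2 → ℝ) (x : Pt) (a b c : Fin 2) : ℝ :=
  pd a (fun y => T y b c) x - ∑ d, Gam d a b x * T x d c - ∑ d, Gam d a c x * T x b d

/-- Covariant derivative `∇_a T_b{}^c` of a (1,1)-tensor (lower, upper). -/
def cdMix (T : Pt → Fin 2 → Fin 2 → ℝ) (x : Pt) (a b c : Fin 2) : ℝ :=
  pd a (fun y => T y b c) x - ∑ d, Gam d a b x * T x d c + ∑ d, Gam c a d x * T x b d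

/-- Covariant Hessian `∇_a ∇_b f`. -/
def hess (f : Pt → ℝ) (x : Pt) (a b : Fin 2) : ℝ := cdCov (fun y c => pd c f y) x a b

/-- Laplace–Beltrami operator `Δf = σ^{ab} ∇_a∇_b f` of the round metric. -/
def lap (f : Pt → ℝ) (x : Pt) : ℝ := ∑ a, ∑ b, rndInv x a b * hess f x a b

/-- Covariant divergence `∇_A Y^A` of a vector field. -/
def divg (Y : Pt → Fin 2 → ℝ) (x : Pt) : ℝ := ∑ a, cdVec Y x a a

/-- The area density `√(det σ)` of the round metric in stereographic coordinates. -/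
def aDen (x : Pt) : ℝ := 4 / (1 + x 0 ^ 2 + x 1 ^ 2) ^ 2

/-- Smoothness of a vector field. -/
def SmoothVec (Y : Pt → Fin 2 → ℝ) : Prop := ∀ b, ContDiff ℝ (⊤ : ℕ∞) (fun x => Y x b)

/-- The conformal Killing equation `∇^A Y^B + ∇^B Y^A = (∇_C Y^C) σ^{AB}` on a set `U`. -/
def ConformalKilling (Y : Pt → Fin 2 → ℝ) (U : Set Pt) : Prop :=
  ∀ x ∈ U, ∀ A B : Fin 2,
    (∑ c, rndInv x A c * cdVec Y x c B) + (∑ c, rndInv x B c * cdVec Y x c A)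
      = divg Y x * rndInv x A B

/-- The curl `ε_{AB} ∇^A Y^B` of a vector field. -/
def curl (Y : Pt → Fin 2 → ℝ) (x : Pt) : ℝ :=
  ∑ a, ∑ b, ∑ c, rndE x a b * rndInv x a c * cdVec Y x c b

/-- `F_{AB} = 2∇_A∇_B f - (Δf) σ_{AB}`. -/
def Ften (f : Pt → ℝ) (x : Pt) (A B : Fin 2) : ℝ :=
  2 * hess f x A B - lap f x * rnd x A B

/-- `∇^E C_{EA}` (a covector field). -/
def divC (C : Pt → Fin 2 → Fin 2 → ℝ) (x : Pt) (A : Fin 2) : ℝ :=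
  ∑ e, ∑ c, rndInv x e c * cdT2 C x c e A

/-- `P_{BA} = ∇_B ∇^E C_{EA} - ∇_A ∇^E C_{EB}`. -/
def Pten (C : Pt → Fin 2 → Fin 2 → ℝ) (x : Pt) (B A : Fin 2) : ℝ :=
  cdCov (divC C) x B A - cdCov (divC C) x A B

/-- `∇_D T^{BD}` for a symmetric (0,2)-tensor `T`, as a vector field. -/
def divUpT (T : Pt → Fin 2 → Fin 2 → ℝ) (x : Pt) (B : Fin 2) : ℝ :=
  ∑ d, ∑ e, ∑ c, rndInv x B e * rndInv x d c * cdT2 T x d e c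

open scoped Matrix

section PlanarCalculus

variable {R A : Type*} [CommRing R] [CommRing A] [Algebra R A] (d : Fin 2 → Derivation R A A)

/-- The gradient covector `∂_a f`. -/
def grad (f : A) : Fin 2 → A := fun a => d a f

/-- The directional derivative `X^a ∂_a g`. -/
def dirDeriv (X : Fin 2 → A) (g : A) : A := X ⬝ᵥ grad d g

/-- The flat divergence `∂_a X^a`. -/
def flatDiv (X : Fin 2 → A) : A := d 0 (X 0) + d 1 (X 1)

/-- The flat curl `∂_0 q_1 - ∂_1 q_0`. -/
def flatCurl (q : Fin 2 → A) : A := d 0 (q 1) - d 1 (q 0)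

/-- Rotation by a right angle, the complex structure of the plane. It is applied both to vectors
and to the pairs encoding symmetric traceless tensors. -/
def rot (X : Fin 2 → A) : Fin 2 → A := ![-X 1, X 0]

/-- The contraction `c_{ab} X^b` of a symmetric traceless tensor with a vector. Throughout, such a
tensor is encoded by the pair `c 0 = c_{00} = -c_{11}`, `c 1 = c_{01} = c_{10}`, so that
`c_{ab} k_{ab} = 2 * (c ⬝ᵥ k)`. -/
def contract (c X : Fin 2 → A) : Fin 2 → A :=
  ![c 0 * X 0 + c 1 * X 1, c 1 * X 0 - c 0 * X 1]

/-- The flat divergence `∂_b c_{ab}` of a symmetric traceless tensor. -/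
def tfDiv (c : Fin 2 → A) : Fin 2 → A :=
  ![d 0 (c 0) + d 1 (c 1), d 0 (c 1) - d 1 (c 0)]

/-- The traceless part of `∂_a X_b + ∂_b X_a`; it vanishes when `X` is conformal Killing. -/
def tfGrad (X : Fin 2 → A) : Fin 2 → A :=
  ![d 0 (X 0) - d 1 (X 1), d 0 (X 1) + d 1 (X 0)]

/-- The Lie derivative of a covector `q` along `X`. -/
def lieCovec (X q : Fin 2 → A) : Fin 2 → A :=
  fun a => dirDeriv d X (q a) + d a (X 0) * q 0 + d a (X 1) * q 1

/-- The Lie derivative of a symmetric traceless tensor along a conformal Killing field `X`, written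
with the flat divergence and curl of `X` only. -/
def lieTf (X c : Fin 2 → A) : Fin 2 → A :=
  ![dirDeriv d X (c 0) + flatDiv d X * c 0 + flatCurl d X * c 1,
    dirDeriv d X (c 1) + flatDiv d X * c 1 - flatCurl d X * c 0]

/-- The combination `2 L_X c - mu c` of the Lie derivative along `X`; for `mu` the metric divergence
of `X` it is the variation that pairs with `F` in the integral. -/
def weightedLieTf (mu : A) (X c : Fin 2 → A) : Fin 2 → A := (2 : A) • lieTf d X c - mu • c

/-- The divergence `∇_a X^a` for the metric `phi δ` with inverse conformal factor `lam`. -/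
def metricDiv (lam phi : A) (X : Fin 2 → A) : A := lam * flatDiv d (phi • X)

/-- The component `P_{01}` of the curl of `∇^e c_{ea}`, for the inverse metric `lam δ`. -/
def curlDiv (lam : A) (c : Fin 2 → A) : A := flatCurl d (lam • tfDiv d c)

/-- The integrand `Y^A [C_{AB} ∇_D F^{BD} + ⋯ - 3 P_{BA} ∇^B f]`, multiplied by the area density,
for the metric `phi δ`. Here `k` encodes `F` and `p` is `P_{01}`. -/
def nonradiativeDensity (lam phi : A) (Y c : Fin 2 → A) (f : A) : A :=
  let k := phi • tfGrad d (lam • grad d f)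
  let p := curlDiv d lam c
  lam * (contract c Y ⬝ᵥ tfDiv d k + contract k Y ⬝ᵥ tfDiv d c)
    + phi * dirDeriv d Y (lam ^ 2 * (c ⬝ᵥ k))
    + f * phi * dirDeriv d (rot Y) (lam * p) + 3 * p * dirDeriv d (rot Y) f

variable {d}

lemma derivation_ofNat (D : Derivation R A A) (n : ℕ) [n.AtLeastTwo] :
    D ofNat(n) = 0 := mod_cast D.map_natCast n

lemma flatDiv_rot (q : Fin 2 → A) : flatDiv d (rot q) = -flatCurl d q := by
  simp [flatDiv, flatCurl, rot]; ring

lemma tfDiv_rot (c : Fin 2 → A) : tfDiv d (rot c) = rot (tfDiv d c) := by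
  ext a; fin_cases a <;> simp [tfDiv, rot]; ring

lemma tfGrad_rot (X : Fin 2 → A) : tfGrad d (rot X) = rot (tfGrad d X) := by
  ext a; fin_cases a <;> simp [tfGrad, rot] <;> ring

lemma grad_sub (f g : A) : grad d (f - g) = grad d f - grad d g := by ext a; simp [grad]

lemma rot_sub (X Z : Fin 2 → A) : rot (X - Z) = rot X - rot Z := by
  ext a; fin_cases a <;> simp [rot, sub_eq_add_neg, add_comm]

lemma rot_smul (g : A) (X : Fin 2 → A) : rot (g • X) = g • rot X := by
  ext a; fin_cases a <;> simp [rot]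

lemma rot_dotProduct (c k : Fin 2 → A) : rot c ⬝ᵥ k = -(c ⬝ᵥ rot k) := by
  simp [rot, dotProduct]

lemma flatDiv_sub (X Z : Fin 2 → A) : flatDiv d (X - Z) = flatDiv d X - flatDiv d Z := by
  simp [flatDiv]; ring

lemma flatDiv_add (X Z : Fin 2 → A) : flatDiv d (X + Z) = flatDiv d X + flatDiv d Z := by
  simp [flatDiv]; ring

lemma tfGrad_sub (X Z : Fin 2 → A) : tfGrad d (X - Z) = tfGrad d X - tfGrad d Z := by
  ext a; fin_cases a <;> simp [tfGrad] <;> ring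

lemma tfGrad_smul_of_const (k : R) (X : Fin 2 → A) : tfGrad d (k • X) = k • tfGrad d X := by
  ext a; fin_cases a <;> simp [tfGrad, smul_sub]

lemma flatDiv_smul (g : A) (X : Fin 2 → A) :
    flatDiv d (g • X) = g * flatDiv d X + dirDeriv d X g := by
  simp [flatDiv, dirDeriv, grad, dotProduct]; ring

lemma flatDiv_contract (c X : Fin 2 → A) :
    flatDiv d (contract c X) = c ⬝ᵥ tfGrad d X + X ⬝ᵥ tfDiv d c := by
  simp [flatDiv, contract, tfGrad, tfDiv, dotProduct]; ring

lemma tfDiv_smul (g : A) (c : Fin 2 → A) :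
    tfDiv d (g • c) = g • tfDiv d c + contract c (grad d g) := by
  ext a; fin_cases a <;> simp [tfDiv, contract, grad] <;> ring

lemma flatCurl_lieCovec (hd : ∀ g, d 1 (d 0 g) = d 0 (d 1 g)) (X q : Fin 2 → A) :
    flatCurl d (lieCovec d X q) = flatDiv d (flatCurl d q • X) := by
  simp [flatCurl, lieCovec, flatDiv, dirDeriv, grad, dotProduct, hd]; ring

lemma tfDiv_lieTf (hd : ∀ g, d 1 (d 0 g) = d 0 (d 1 g)) (X c : Fin 2 → A) :
    tfDiv d (lieTf d X c) = lieCovec d X (tfDiv d c) + flatDiv d X • tfDiv d c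
      + rot (tfGrad d X 0 • grad d (c 1) - tfGrad d X 1 • grad d (c 0))
      + contract c (tfDiv d (tfGrad d X)) := by
  ext a
  simp only [Pi.add_apply, lieCovec]
  fin_cases a <;>
  · simp [flatCurl, tfDiv, tfGrad, lieTf, rot, contract, flatDiv, dirDeriv, grad, dotProduct, hd]
    ring

lemma lieCovec_smul (g : A) (X q : Fin 2 → A) :
    lieCovec d X (g • q) = g • lieCovec d X q + dirDeriv d X g • q := by
  ext a
  simp [lieCovec, dirDeriv, grad, dotProduct]; ring

lemma flatCurl_smul (g : A) (q : Fin 2 → A) :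
    flatCurl d (g • q) = g * flatCurl d q + rot (grad d g) ⬝ᵥ q := by
  simp [flatCurl, rot, grad, dotProduct]; ring

lemma flatCurl_contract (c q : Fin 2 → A) :
    flatCurl d (contract c q) = rot q ⬝ᵥ tfDiv d c - rot c ⬝ᵥ tfGrad d q := by
  simp [flatCurl, contract, rot, tfGrad, tfDiv, dotProduct]; ring

lemma grad_flatDiv_sub_rot_grad (hd : ∀ g, d 1 (d 0 g) = d 0 (d 1 g)) (X : Fin 2 → A) :
    grad d (flatDiv d X) - rot (grad d (flatDiv d (rot X))) = tfDiv d (tfGrad d X) := by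
  ext a
  fin_cases a <;> simp [grad, flatDiv, rot, tfDiv, tfGrad, hd] <;> ring

lemma grad_dotProduct_sub_rot_grad (X q : Fin 2 → A) :
    grad d (X ⬝ᵥ q) - rot (grad d (rot X ⬝ᵥ q)) =
      flatDiv d q • X - flatCurl d q • rot X + contract (tfGrad d X) q := by
  ext a
  simp only [Pi.add_apply, Pi.sub_apply]
  fin_cases a <;>
  · simp [grad, flatDiv, flatCurl, rot, contract, tfGrad, dotProduct]
    ring

section ConformalFactor

variable {lam phi : A} (h : lam * phi = 1)
include h

lemma metricDiv_eq (X : Fin 2 → A) :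
    metricDiv d lam phi X = flatDiv d X - X ⬝ᵥ (phi • grad d lam) := by
  have hphi (a : Fin 2) := (d a).leibniz_of_mul_eq_one ((mul_comm phi lam).trans h)
  simp only [metricDiv, flatDiv_smul, dirDeriv, grad, dotProduct, Fin.sum_univ_two, hphi,
    Pi.smul_apply, smul_eq_mul]
  linear_combination (flatDiv d X - phi * (X 0 * d 0 lam + X 1 * d 1 lam)) * h

lemma mul_metricDiv (X : Fin 2 → A) :
    lam * metricDiv d lam phi X = lam * flatDiv d X - dirDeriv d X lam := by
  rw [metricDiv_eq h, dotProduct_smul, smul_eq_mul, dirDeriv]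
  linear_combination (-(X ⬝ᵥ grad d lam)) * h

lemma flatCurl_smul_grad (hd : ∀ g, d 1 (d 0 g) = d 0 (d 1 g)) :
    flatCurl d (phi • grad d lam) = 0 := by
  have hphi (a : Fin 2) := (d a).leibniz_of_mul_eq_one ((mul_comm phi lam).trans h)
  simp [flatCurl, grad, hphi, hd]; ring

end ConformalFactor

section DifferentialIdeal

-- The conformal Killing equation is assumed modulo a differential ideal `I`: in the application,
-- the functions vanishing on `U`.
variable {I : Ideal A}

lemma exists_tfDiv_lieTf_eq_add (hd : ∀ g, d 1 (d 0 g) = d 0 (d 1 g))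
    (hI : ∀ a, ∀ g ∈ I, d a g ∈ I) {X : Fin 2 → A} (hX : ∀ a, tfGrad d X a ∈ I) (c : Fin 2 → A) :
    ∃ e : Fin 2 → A, (∀ a, e a ∈ I) ∧
      tfDiv d (lieTf d X c) = lieCovec d X (tfDiv d c) + flatDiv d X • tfDiv d c + e := by
  refine ⟨_, ?_, (tfDiv_lieTf hd X c).trans (add_assoc _ _ _)⟩
  have hdX : ∀ b a, d b (tfGrad d X a) ∈ I := fun b a => hI b _ (hX a)
  simp only [← Ideal.Quotient.eq_zero_iff_mem] at hX hdX ⊢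
  intro a
  fin_cases a <;> simp [rot, contract, tfDiv, hX, hdX]

lemma exists_smul_tfDiv_weightedLieTf_eq_add (hd : ∀ g, d 1 (d 0 g) = d 0 (d 1 g))
    {lam mu : A} {X : Fin 2 → A} (hI : ∀ a, ∀ g ∈ I, d a g ∈ I)
    (hmu : lam * mu = lam * flatDiv d X - dirDeriv d X lam) (hX : ∀ a, tfGrad d X a ∈ I)
    (c : Fin 2 → A) :
    ∃ e : Fin 2 → A, (∀ a, e a ∈ I) ∧ lam • tfDiv d (weightedLieTf d mu X c) =
      (2 : A) • lieCovec d X (lam • tfDiv d c) + mu • lam • tfDiv d c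
        - contract c (lam • grad d mu) + e := by
  obtain ⟨e, he, hdiv⟩ := exists_tfDiv_lieTf_eq_add hd hI hX c
  refine ⟨(2 * lam) • e, fun a => I.mul_mem_left _ (he a), ?_⟩
  have hlin : tfDiv d (weightedLieTf d mu X c) =
      (2 : A) • tfDiv d (lieTf d X c) - tfDiv d (mu • c) := by
    ext a
    fin_cases a <;> simp [weightedLieTf, tfDiv, derivation_ofNat] <;> ring
  rw [hlin, tfDiv_smul, hdiv, lieCovec_smul]
  ext a
  have hcontract : contract c (lam • grad d mu) a = lam * contract c (grad d mu) a := by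
    fin_cases a <;> simp [contract] <;> ring
  simp only [Pi.add_apply, Pi.sub_apply, Pi.smul_apply, smul_eq_mul, hcontract]
  linear_combination (-2 * tfDiv d c a) * hmu

lemma curlDiv_weightedLieTf_sub_mem (hd : ∀ g, d 1 (d 0 g) = d 0 (d 1 g)) {lam mu : A}
    {X : Fin 2 → A} (hI : ∀ a, ∀ g ∈ I, d a g ∈ I)
    (hmu : lam * mu = lam * flatDiv d X - dirDeriv d X lam) (hX : ∀ a, tfGrad d X a ∈ I)
    (c : Fin 2 → A) :
    curlDiv d lam (weightedLieTf d mu X c) - (2 * flatDiv d (curlDiv d lam c • X)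
      + mu * curlDiv d lam c + rot c ⬝ᵥ tfGrad d (lam • grad d mu)) ∈ I := by
  obtain ⟨e, he, hm⟩ := exists_smul_tfDiv_weightedLieTf_eq_add hd hI hmu hX c
  set q := lam • tfDiv d c with hq
  have hcurl : curlDiv d lam (weightedLieTf d mu X c) = 2 * flatCurl d (lieCovec d X q)
      + flatCurl d (mu • q) - flatCurl d (contract c (lam • grad d mu)) + flatCurl d e := by
    rw [curlDiv, hm]
    simp [flatCurl, derivation_ofNat]; ring
  have hdot : rot (lam • grad d mu) ⬝ᵥ tfDiv d c = rot (grad d mu) ⬝ᵥ q := by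
    rw [rot_smul, smul_dotProduct, hq, dotProduct_smul]
  have herr : flatCurl d e ∈ I := I.sub_mem (hI _ _ (he 1)) (hI _ _ (he 0))
  convert herr using 1
  rw [hcurl, flatCurl_lieCovec hd, flatCurl_smul mu q, flatCurl_contract, hdot,
    show flatCurl d q = curlDiv d lam c from rfl]
  ring

-- `hK` says that the metric `phi δ` has constant Gauss curvature `K`.
lemma tfGrad_grad_metricDiv_sub_mem (hd : ∀ g, d 1 (d 0 g) = d 0 (d 1 g)) {lam phi : A}
    {Y : Fin 2 → A} (hI : ∀ a, ∀ g ∈ I, d a g ∈ I)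
    (h : lam * phi = 1) {K : R} (hK : flatDiv d (phi • grad d lam) = (2 * K) • phi)
    (hY : ∀ a, tfGrad d Y a ∈ I) (a : Fin 2) :
    (tfGrad d (lam • grad d (metricDiv d lam phi Y))
      - rot (tfGrad d (lam • grad d (metricDiv d lam phi (rot Y))))) a ∈ I := by
  obtain ⟨e, he, hgrad⟩ : ∃ e : Fin 2 → A, (∀ a, e a ∈ I) ∧
      grad d (metricDiv d lam phi Y) - rot (grad d (metricDiv d lam phi (rot Y))) =
        e - ((2 * K) • phi) • Y := by
    refine ⟨tfDiv d (tfGrad d Y) - contract (tfGrad d Y) (phi • grad d lam), fun b => ?_, ?_⟩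
    · have hdY : ∀ b a, d b (tfGrad d Y a) ∈ I := fun b a => hI b _ (hY a)
      simp only [← Ideal.Quotient.eq_zero_iff_mem] at hY hdY ⊢
      fin_cases b <;> simp [contract, tfDiv, hY, hdY]
    · have hη := grad_dotProduct_sub_rot_grad (d := d) Y (phi • grad d lam)
      rw [hK, flatCurl_smul_grad h hd, zero_smul] at hη
      rw [← grad_flatDiv_sub_rot_grad hd, metricDiv_eq h, metricDiv_eq h, grad_sub, grad_sub,
        rot_sub]
      linear_combination -hη
  have hlam : lam • grad d (metricDiv d lam phi Y)
      - rot (lam • grad d (metricDiv d lam phi (rot Y))) = lam • e - (2 * K) • Y := by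
    rw [rot_smul, ← smul_sub, hgrad, smul_sub, smul_assoc, smul_comm lam, smul_smul lam, h,
      one_smul]
  rw [← tfGrad_rot, ← tfGrad_sub, hlam, tfGrad_sub, tfGrad_smul_of_const]
  refine I.sub_mem ?_ (Submodule.smul_of_tower_mem I _ (hY a))
  have hde : ∀ b c, d b ((lam • e) c) ∈ I := fun b c => hI b _ (I.mul_mem_left _ (he c))
  fin_cases a
  exacts [I.sub_mem (hde 0 0) (hde 1 1), I.add_mem (hde 0 1) (hde 1 0)]

end DifferentialIdeal

lemma dotProduct_tfGrad_smul_grad (lam f : A) (c : Fin 2 → A) :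
    c ⬝ᵥ tfGrad d (lam • grad d f) =
      flatDiv d (contract c (lam • grad d f) - (f * lam) • tfDiv d c)
        + f * flatDiv d (lam • tfDiv d c) := by
  rw [flatDiv_sub, flatDiv_contract, mul_smul, flatDiv_smul]
  simp [dirDeriv, dotProduct]; ring

lemma dirDeriv_sq_mul {lam phi : A} (h : lam * phi = 1) (Y : Fin 2 → A) (s : A) :
    phi * dirDeriv d Y (lam ^ 2 * s) = lam * dirDeriv d Y s + 2 * s * dirDeriv d Y lam := by
  simp [dirDeriv, grad, dotProduct]
  linear_combination (lam * (Y 0 * d 0 s + Y 1 * d 1 s)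
    + 2 * s * (Y 0 * d 0 lam + Y 1 * d 1 lam)) * h

lemma contract_dotProduct_tfDiv_add_eq_flatDiv_sub {lam phi : A} (h : lam * phi = 1)
    (c k Y : Fin 2 → A) :
    lam * (contract c Y ⬝ᵥ tfDiv d k + contract k Y ⬝ᵥ tfDiv d c)
      + phi * dirDeriv d Y (lam ^ 2 * (c ⬝ᵥ k)) =
    flatDiv d (lam • (contract k (contract c Y) + (c ⬝ᵥ k) • Y))
      - lam * (rot (weightedLieTf d (metricDiv d lam phi (rot Y)) (rot Y) c) ⬝ᵥ k) := by
  have hmu := mul_metricDiv (d := d) h (rot Y)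
  rw [dirDeriv_sq_mul h]
  generalize metricDiv d lam phi (rot Y) = mu at hmu ⊢
  simp [-Matrix.add_cons, -Matrix.cons_add, contract, tfDiv, dotProduct, dirDeriv, grad, flatDiv,
    weightedLieTf, lieTf, rot, flatCurl] at hmu ⊢
  linear_combination (c 1 * k 0 - c 0 * k 1) * hmu

lemma mul_dirDeriv_add_eq_flatDiv_sub {lam phi : A} (h : lam * phi = 1) (f p : A) (X : Fin 2 → A) :
    f * phi * dirDeriv d X (lam * p) + 3 * p * dirDeriv d X f =
      flatDiv d ((3 * (f * p)) • X)
        - f * (2 * flatDiv d (p • X) + metricDiv d lam phi X * p) := by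
  rw [metricDiv_eq h]
  simp [flatDiv, dirDeriv, grad, dotProduct, derivation_ofNat]
  linear_combination (f * (X 0 * d 0 p + X 1 * d 1 p)) * h

lemma exists_nonradiativeDensity_eq_flatDiv_add {lam phi : A} (h : lam * phi = 1)
    (Y c : Fin 2 → A) (f : A) {J : Ideal A} (hJ : ∀ a, ∀ g ∈ J, d a g ∈ J) (hf : f ∈ J) :
    ∃ V : Fin 2 → A, (∀ a, V a ∈ J) ∧ nonradiativeDensity d lam phi Y c f = flatDiv d V
      + f * (curlDiv d lam (weightedLieTf d (metricDiv d lam phi (rot Y)) (rot Y) c)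
        - (2 * flatDiv d (curlDiv d lam c • rot Y)
          + metricDiv d lam phi (rot Y) * curlDiv d lam c)) := by
  set p := curlDiv d lam c
  set k := phi • tfGrad d (lam • grad d f) with hk
  set m := weightedLieTf d (metricDiv d lam phi (rot Y)) (rot Y) c
  refine ⟨lam • (contract k (contract c Y) + (c ⬝ᵥ k) • Y)
    - (contract (rot m) (lam • grad d f) - (f * lam) • tfDiv d (rot m))
    + (3 * (f * p)) • rot Y, ?_, ?_⟩
  · have hdf : ∀ a, d a f ∈ J := fun a => hJ a f hf
    have hddf : ∀ a b, d a (d b f) ∈ J := fun a b => hJ a _ (hdf b)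
    simp only [← Ideal.Quotient.eq_zero_iff_mem] at hf hdf hddf ⊢
    intro a
    simp only [Pi.add_apply, Pi.sub_apply, Pi.smul_apply]
    fin_cases a <;>
      simp [k, contract, tfGrad, grad, dotProduct, hf, hdf, hddf]
  · have hcurl : flatDiv d (lam • tfDiv d (rot m)) = -curlDiv d lam m := by
      rw [tfDiv_rot, ← rot_smul, flatDiv_rot, curlDiv]
    have hpair : lam * (rot m ⬝ᵥ k) = flatDiv d
          (contract (rot m) (lam • grad d f) - (f * lam) • tfDiv d (rot m))
        - f * curlDiv d lam m := by
      rw [hk, dotProduct_smul, smul_eq_mul, ← mul_assoc, h, one_mul, dotProduct_tfGrad_smul_grad,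
        hcurl]
      ring
    rw [flatDiv_add, flatDiv_sub, nonradiativeDensity]
    linear_combination contract_dotProduct_tfDiv_add_eq_flatDiv_sub (d := d) h c k Y
      + mul_dirDeriv_add_eq_flatDiv_sub (d := d) h f p (rot Y) - hpair

theorem exists_nonradiativeDensity_eq_flatDiv_sub (hd : ∀ g, d 1 (d 0 g) = d 0 (d 1 g))
    {lam phi : A} (h : lam * phi = 1) {K : R} (hK : flatDiv d (phi • grad d lam) = (2 * K) • phi)
    {I J : Ideal A} (hI : ∀ a, ∀ g ∈ I, d a g ∈ I) (hJ : ∀ a, ∀ g ∈ J, d a g ∈ J)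
    {Y : Fin 2 → A} (hY : ∀ a, tfGrad d Y a ∈ I) {f : A} (hf : f ∈ J) (hfI : ∀ e ∈ I, f * e = 0)
    (c : Fin 2 → A) :
    ∃ V : Fin 2 → A, (∀ a, V a ∈ J) ∧ nonradiativeDensity d lam phi Y c f = flatDiv d V
      - f * (c ⬝ᵥ tfGrad d (lam • grad d (metricDiv d lam phi Y))) := by
  obtain ⟨V, hV, hdens⟩ := exists_nonradiativeDensity_eq_flatDiv_add h Y c f hJ hf
  have hrotY : ∀ a, tfGrad d (rot Y) a ∈ I := by
    intro a
    rw [tfGrad_rot]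
    fin_cases a
    exacts [I.neg_mem (hY 1), hY 0]
  have hcurl := hfI _ (curlDiv_weightedLieTf_sub_mem hd hI (mul_metricDiv h (rot Y)) hrotY c)
  have hgrad := fun a => hfI _ (tfGrad_grad_metricDiv_sub_mem hd hI h hK hY a)
  refine ⟨V, hV, ?_⟩
  rw [hdens]
  rw [rot_dotProduct] at hcurl
  simp only [Pi.sub_apply, dotProduct, Fin.sum_univ_two] at hgrad hcurl ⊢
  linear_combination hcurl + c 0 * hgrad 0 + c 1 * hgrad 1

end PlanarCalculus

open scoped Manifold ContDiff

/-- The algebra of smooth functions on the chart. -/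
abbrev SmoothFn := C^∞⟮𝓘(ℝ, Pt), Pt; 𝓘(ℝ, ℝ), ℝ⟯

section SmoothFunctions

lemma contDiff_smoothFn (g : SmoothFn) : ContDiff ℝ ∞ g := g.contMDiff.contDiff

lemma smoothFn_ofNat_apply (n : ℕ) [n.AtLeastTwo] (x : Pt) :
    (ofNat(n) : SmoothFn) x = ofNat(n) :=
  map_ofNat (ContMDiffMap.evalRingHom x : SmoothFn →+* ℝ) n

lemma differentiableAt_smoothFn (g : SmoothFn) (x : Pt) : DifferentiableAt ℝ g x :=
  (contDiff_smoothFn g).differentiable (by simp) x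

/-- The partial derivative `∂_a`, as a derivation of the algebra of smooth functions. -/
def pderiv (a : Fin 2) : Derivation ℝ SmoothFn SmoothFn :=
  .mk'
    { toFun := fun g => ⟨pd a g,
        (((contDiff_smoothFn g).fderiv_right (m := ∞) le_rfl).clm_apply contDiff_const).contMDiff⟩
      map_add' := fun g k => by
        ext x
        exact congrArg (· (Pi.single a 1))
          (fderiv_add (differentiableAt_smoothFn g x) (differentiableAt_smoothFn k x))
      map_smul' := fun r g => by
        ext x
        exact congrArg (· (Pi.single a 1)) (fderiv_const_smul (differentiableAt_smoothFn g x) r) }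
    fun g k => by
      ext x
      exact congrArg (· (Pi.single a 1))
        (fderiv_mul (differentiableAt_smoothFn g x) (differentiableAt_smoothFn k x))

lemma pderiv_apply (a : Fin 2) (g : SmoothFn) (x : Pt) :
    pderiv a g x = fderiv ℝ g x (Pi.single a 1) := rfl

lemma pd_coe (a : Fin 2) (g : SmoothFn) (x : Pt) : pd a g x = pderiv a g x := rfl

lemma pd_neg (a : Fin 2) (g : Pt → ℝ) (x : Pt) : pd a (fun y => -g y) x = -pd a g x := by
  simp [pd]

lemma pd_const (a : Fin 2) (r : ℝ) (x : Pt) : pd a (fun _ => r) x = 0 := by simp [pd]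

lemma pderiv_comm (g : SmoothFn) : pderiv 1 (pderiv 0 g) = pderiv 0 (pderiv 1 g) := by
  ext x
  have hg := contDiff_smoothFn g
  have hfderiv : DifferentiableAt ℝ (fderiv ℝ g) x :=
    (hg.fderiv_right (m := ∞) le_rfl).differentiable (by simp) x
  have hsecond (a b : Fin 2) : pderiv a (pderiv b g) x =
      fderiv ℝ (fderiv ℝ g) x (Pi.single a 1) (Pi.single b 1) := by
    change fderiv ℝ (fun y => fderiv ℝ g y (Pi.single b 1)) x (Pi.single a 1) = _
    simp [fderiv_clm_apply hfderiv (differentiableAt_const _)]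
  rw [hsecond, hsecond]
  exact hg.contDiffAt.isSymmSndFDerivAt (by simp; norm_cast) _ _

/-- The ideal of smooth functions vanishing on `s`; it is differential when `s` is open. -/
def vanishingIdealOn (s : Set Pt) : Ideal SmoothFn where
  carrier := {g | ∀ x ∈ s, g x = 0}
  zero_mem' := fun _ _ => rfl
  add_mem' := fun hg hk x hx => by simp [hg x hx, hk x hx]
  smul_mem' := fun k g hg x hx => by simp [hg x hx]

lemma pderiv_mem_vanishingIdealOn {s : Set Pt} (hs : IsOpen s) (a : Fin 2) {g : SmoothFn}
    (hg : g ∈ vanishingIdealOn s) : pderiv a g ∈ vanishingIdealOn s := by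
  intro x hx
  have hzero : g =ᶠ[nhds x] fun _ => (0 : ℝ) := by
    filter_upwards [hs.mem_nhds hx] with y hy using hg y hy
  rw [← pd_coe, pd, hzero.fderiv_eq, fderiv_const_apply, zero_apply]

lemma mul_eq_zero_of_mem_vanishingIdealOn {s : Set Pt} {f e : SmoothFn}
    (hf : f ∈ vanishingIdealOn sᶜ) (he : e ∈ vanishingIdealOn s) : f * e = 0 := by
  ext x
  by_cases hx : x ∈ s
  · simp [he x hx]
  · simp [hf x hx]

lemma integrable_of_mem_vanishingIdealOn {K : Set Pt} (hK : IsCompact K) {g : SmoothFn}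
    (hg : g ∈ vanishingIdealOn Kᶜ) : Integrable g :=
  g.contMDiff.continuous.integrable_of_hasCompactSupport (.intro hK hg)

lemma integral_pderiv_eq_zero {K : Set Pt} (hK : IsCompact K) {a : Fin 2} {g : SmoothFn}
    (hg : g ∈ vanishingIdealOn Kᶜ) : ∫ x, pderiv a g x = 0 := by
  have hpderiv : Integrable fun x => fderiv ℝ g x (Pi.single a 1) :=
    integrable_of_mem_vanishingIdealOn hK
      (pderiv_mem_vanishingIdealOn hK.isClosed.isOpen_compl a hg)
  have hparts := integral_mul_fderiv_eq_neg_fderiv_mul_of_integrable (μ := volume)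
    (f := fun _ : Pt => (1 : ℝ)) (g := g) (v := Pi.single a 1) (by simp)
    (by simpa using hpderiv)
    (by simpa using integrable_of_mem_vanishingIdealOn hK hg)
    (fun x _ => differentiableAt_const _) (fun x _ => differentiableAt_smoothFn g x)
  simpa [pderiv_apply] using hparts

lemma integral_flatDiv_eq_zero {K : Set Pt} (hK : IsCompact K) {V : Fin 2 → SmoothFn}
    (hV : ∀ a, V a ∈ vanishingIdealOn Kᶜ) : ∫ x, flatDiv pderiv V x = 0 := by
  have hpderiv (a : Fin 2) := pderiv_mem_vanishingIdealOn hK.isClosed.isOpen_compl a (hV a)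
  simp only [flatDiv, ContMDiffMap.coe_add, Pi.add_apply]
  rw [integral_add (integrable_of_mem_vanishingIdealOn hK (hpderiv 0))
    (integrable_of_mem_vanishingIdealOn hK (hpderiv 1)),
    integral_pderiv_eq_zero hK (hV 0), integral_pderiv_eq_zero hK (hV 1), add_zero]

end SmoothFunctions

/-- The coordinate function `x ↦ x i`. -/
def coordFn (i : Fin 2) : SmoothFn := ⟨fun x => x i, (contDiff_apply ℝ ℝ i).contMDiff⟩

lemma coordFn_apply (i : Fin 2) (x : Pt) : coordFn i x = x i := rfl

lemma pderiv_coordFn (a i : Fin 2) : pderiv a (coordFn i) = if a = i then 1 else 0 := by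
  ext x
  have hcoord : HasFDerivAt (fun y : Pt => y i)
      (ContinuousLinearMap.proj (R := ℝ) (φ := fun _ : Fin 2 => ℝ) i) x := hasFDerivAt_apply i x
  change fderiv ℝ (fun y : Pt => y i) x (Pi.single a 1) = _
  rw [hcoord.fderiv]
  by_cases h : a = i <;> simp [h, Ne.symm]

/-- The conformal factor `φ` of the round metric `σ = φ δ`, which is also its area density. -/
def confFactor : SmoothFn :=
  ⟨fun x => 4 / (1 + x 0 ^ 2 + x 1 ^ 2) ^ 2,
    (contDiff_const.div (by fun_prop) fun x => by positivity).contMDiff⟩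

/-- The inverse conformal factor `λ = φ⁻¹`, so that `σ⁻¹ = λ δ`. -/
def invConfFactor : SmoothFn := (1 / 4 : ℝ) • (1 + coordFn 0 ^ 2 + coordFn 1 ^ 2) ^ 2

lemma confFactor_apply (x : Pt) : confFactor x = 4 / (1 + x 0 ^ 2 + x 1 ^ 2) ^ 2 := rfl

lemma invConfFactor_apply (x : Pt) : invConfFactor x = (1 + x 0 ^ 2 + x 1 ^ 2) ^ 2 / 4 := by
  simp [invConfFactor, coordFn_apply]
  ring

lemma invConfFactor_mul_confFactor : invConfFactor * confFactor = 1 := by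
  ext x
  have : 1 + x 0 ^ 2 + x 1 ^ 2 ≠ 0 := by positivity
  simp only [ContMDiffMap.coe_mul, Pi.mul_apply, invConfFactor_apply, confFactor_apply,
    ContMDiffMap.coe_one, Pi.one_apply]
  field_simp

lemma pderiv_confFactor (a : Fin 2) :
    pderiv a confFactor = -confFactor ^ 2 * pderiv a invConfFactor :=
  (pderiv a).leibniz_of_mul_eq_one
    ((mul_comm confFactor invConfFactor).trans invConfFactor_mul_confFactor)

lemma pderiv_invConfFactor (a : Fin 2) :
    pderiv a invConfFactor = (1 + coordFn 0 ^ 2 + coordFn 1 ^ 2) * coordFn a := by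
  ext x
  fin_cases a <;>
  · simp [invConfFactor, pderiv_coordFn, smoothFn_ofNat_apply]
    ring

lemma flatDiv_confFactor_smul_grad :
    flatDiv pderiv (confFactor • grad pderiv invConfFactor) = (2 * 1 : ℝ) • confFactor := by
  ext x
  have : 1 + x 0 ^ 2 + x 1 ^ 2 ≠ 0 := by positivity
  simp [flatDiv, grad, pderiv_invConfFactor, pderiv_confFactor, pderiv_coordFn,
    confFactor_apply, coordFn_apply, smoothFn_ofNat_apply]
  field_simp
  ring

lemma rnd_eq (x : Pt) (a b : Fin 2) : rnd x a b = confFactor x * if a = b then 1 else 0 := rfl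

lemma rndInv_eq (x : Pt) (a b : Fin 2) :
    rndInv x a b = invConfFactor x * if a = b then 1 else 0 := by
  rw [rndInv, invConfFactor_apply]

lemma aDen_eq (x : Pt) : aDen x = confFactor x := rfl

lemma invConfFactor_mul_confFactor_apply (x : Pt) : invConfFactor x * confFactor x = 1 :=
  congrArg (fun g : SmoothFn => g x) invConfFactor_mul_confFactor

/-- `w_a = ½ ∂_a log φ`, the covector from which the Christoffel symbols of `φ δ` are built. -/
def halfLogGrad (a : Fin 2) : SmoothFn :=
  (-1 / 2 : ℝ) • (confFactor * pderiv a invConfFactor)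

lemma pderiv_confFactor_apply (a : Fin 2) (x : Pt) :
    pderiv a confFactor x = 2 * confFactor x * halfLogGrad a x := by
  simp [pderiv_confFactor, halfLogGrad]
  ring

lemma pderiv_invConfFactor_apply (a : Fin 2) (x : Pt) :
    pderiv a invConfFactor x = -2 * invConfFactor x * halfLogGrad a x := by
  simp [halfLogGrad]
  linear_combination -pderiv a invConfFactor x * invConfFactor_mul_confFactor_apply x

lemma Gam_eq (c a b : Fin 2) (x : Pt) :
    Gam c a b x = (if c = b then halfLogGrad a x else 0) + (if c = a then halfLogGrad b x else 0)
      - if a = b then halfLogGrad c x else 0 := by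
  have hpd (e i j : Fin 2) : pd e (fun y => rnd y i j) x =
      2 * confFactor x * halfLogGrad e x * if i = j then 1 else 0 := by
    split_ifs with hij
    · simp only [rnd_eq, if_pos hij, mul_one, pd_coe, pderiv_confFactor_apply]
    · simp only [rnd_eq, if_neg hij, mul_zero, pd_const]
  rw [← one_mul (_ - _), ← invConfFactor_mul_confFactor_apply x]
  simp only [Gam, hpd, rndInv_eq, Fin.sum_univ_two]
  fin_cases c <;> fin_cases a <;> fin_cases b <;> simp <;> ring

/-- The symmetric traceless tensor with components `C_00 = -C_11 = c_0`, `C_01 = C_10 = c_1`. -/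
def stfTensor (c : Fin 2 → SmoothFn) (x : Pt) : Fin 2 → Fin 2 → ℝ :=
  ![![c 0 x, c 1 x], ![c 1 x, -c 0 x]]

/-- The antisymmetric tensor with component `P_01 = p`. -/
def altTensor (p : SmoothFn) (x : Pt) : Fin 2 → Fin 2 → ℝ := ![![0, p x], ![-p x, 0]]

lemma divC_stfTensor (c : Fin 2 → SmoothFn) :
    divC (stfTensor c) = fun x a => (invConfFactor • tfDiv pderiv c) a x := by
  ext x a
  fin_cases a <;>
  · simp [divC, cdT2, stfTensor, rndInv_eq, Gam_eq, tfDiv, pd_coe, pd_neg]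
    ring

lemma divUpT_stfTensor (c : Fin 2 → SmoothFn) (x : Pt) (a : Fin 2) :
    divUpT (stfTensor c) x a = invConfFactor x ^ 2 * tfDiv pderiv c a x := by
  fin_cases a <;>
  · simp [divUpT, cdT2, stfTensor, rndInv_eq, Gam_eq, tfDiv, pd_coe, pd_neg]
    ring

lemma Pten_stfTensor (c : Fin 2 → SmoothFn) :
    Pten (stfTensor c) = altTensor (curlDiv pderiv invConfFactor c) := by
  ext x a b
  simp only [Pten, divC_stfTensor, cdCov, pd_coe, Gam_eq, altTensor, curlDiv, flatCurl]
  fin_cases a <;> fin_cases b <;> simp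

lemma trace_cdT2_altTensor (p : SmoothFn) (x : Pt) (a : Fin 2) :
    ∑ b, ∑ c, rndInv x b c * cdT2 (altTensor p) x c b a =
      rot (grad pderiv (invConfFactor * p)) a x := by
  fin_cases a <;>
  · simp [cdT2, altTensor, rndInv_eq, Gam_eq, rot, grad, pd_coe, pd_neg, pd_const,
      pderiv_invConfFactor_apply]
    ring

lemma hess_eq (f : SmoothFn) (x : Pt) (a b : Fin 2) :
    hess f x a b = pderiv a (pderiv b f) x - halfLogGrad a x * pderiv b f x
      - halfLogGrad b x * pderiv a f x
      + if a = b then ∑ c, halfLogGrad c x * pderiv c f x else 0 := by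
  simp only [hess, cdCov, Gam_eq, pd_coe, Fin.sum_univ_two]
  fin_cases a <;> fin_cases b <;> simp <;> ring

lemma hess_symm (f : SmoothFn) (x : Pt) : hess f x 1 0 = hess f x 0 1 := by
  simp [hess_eq, pderiv_comm]; ring

lemma smul_tfGrad_smul_grad_apply_zero (f : SmoothFn) (x : Pt) :
    (confFactor • tfGrad pderiv (invConfFactor • grad pderiv f)) 0 x =
      hess f x 0 0 - hess f x 1 1 := by
  rw [← one_mul (_ - _), ← invConfFactor_mul_confFactor_apply x]
  simp [tfGrad, grad, hess_eq, pderiv_invConfFactor_apply]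
  ring

lemma smul_tfGrad_smul_grad_apply_one (f : SmoothFn) (x : Pt) :
    (confFactor • tfGrad pderiv (invConfFactor • grad pderiv f)) 1 x = 2 * hess f x 0 1 := by
  rw [← one_mul (2 * _), ← invConfFactor_mul_confFactor_apply x]
  simp [tfGrad, grad, hess_eq, pderiv_invConfFactor_apply, pderiv_comm]
  ring

lemma lap_mul_confFactor (f : SmoothFn) (x : Pt) :
    lap f x * confFactor x = hess f x 0 0 + hess f x 1 1 := by
  simp [lap, rndInv_eq]
  linear_combination (hess f x 0 0 + hess f x 1 1) * invConfFactor_mul_confFactor_apply x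

lemma Ften_eq (f : SmoothFn) :
    Ften f = stfTensor (confFactor • tfGrad pderiv (invConfFactor • grad pderiv f)) := by
  ext x a b
  rw [Ften, rnd_eq, ← mul_assoc, lap_mul_confFactor]
  simp only [stfTensor, smul_tfGrad_smul_grad_apply_zero, smul_tfGrad_smul_grad_apply_one]
  fin_cases a <;> fin_cases b <;> simp [hess_symm] <;> ring

lemma divg_eq (Y : Fin 2 → SmoothFn) :
    divg (fun x a => Y a x) = metricDiv pderiv invConfFactor confFactor Y := by
  ext x
  rw [← one_mul (divg _ x), ← invConfFactor_mul_confFactor_apply x]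
  simp [divg, cdVec, Gam_eq, pd_coe, metricDiv, flatDiv, pderiv_confFactor_apply]
  ring

lemma tfGrad_mem_vanishingIdealOn {Y : Fin 2 → SmoothFn} {U : Set Pt}
    (hY : ConformalKilling (fun x a => Y a x) U) (a : Fin 2) :
    tfGrad pderiv Y a ∈ vanishingIdealOn U := by
  intro x hx
  refine (mul_eq_zero.mp ?_).resolve_left
    (left_ne_zero_of_mul_eq_one (invConfFactor_mul_confFactor_apply x))
  fin_cases a
  · change invConfFactor x * (pderiv 0 (Y 0) x - pderiv 1 (Y 1) x) = 0
    have hdiag := hY x hx 0 0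
    simp [divg, cdVec, rndInv_eq, Gam_eq, pd_coe] at hdiag
    linear_combination hdiag
  · change invConfFactor x * (pderiv 0 (Y 1) x + pderiv 1 (Y 0) x) = 0
    have hoff := hY x hx 0 1
    simp [divg, cdVec, rndInv_eq, Gam_eq, pd_coe] at hoff
    linear_combination hoff

lemma sum_rndInv_stfTensor (c k : Fin 2 → SmoothFn) (x : Pt) :
    ∑ A, ∑ B, ∑ a, ∑ b,
        stfTensor c x A B * rndInv x A a * rndInv x B b * stfTensor k x a b =
      2 * (invConfFactor ^ 2 * (c ⬝ᵥ k)) x := by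
  simp [stfTensor, rndInv_eq, dotProduct]
  ring

lemma sum_rndInv_hess_stfTensor (g : SmoothFn) (c : Fin 2 → SmoothFn) (x : Pt) :
    (∑ A, ∑ B, ∑ a, ∑ b, rndInv x A a * rndInv x B b * hess g x a b * stfTensor c x A B)
        * confFactor x =
      (c ⬝ᵥ tfGrad pderiv (invConfFactor • grad pderiv g)) x := by
  have hdiag := smul_tfGrad_smul_grad_apply_zero g x
  have hoff := smul_tfGrad_smul_grad_apply_one g x
  have h : (invConfFactor x * confFactor x) ^ 2 = 1 := by
    rw [invConfFactor_mul_confFactor_apply, one_pow]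
  rw [← one_mul ((_ ⬝ᵥ _ : SmoothFn) x), ← h]
  simp [rndInv_eq, stfTensor, dotProduct, hess_symm] at hdiag hoff ⊢
  linear_combination
    -invConfFactor x ^ 2 * confFactor x * (c 0 x * hdiag + c 1 x * hoff)

lemma integrand_eq_nonradiativeDensity (Y c : Fin 2 → SmoothFn) (f : SmoothFn) (x : Pt) :
    (∑ A, Y A x *
        ((∑ B, stfTensor c x A B * divUpT (Ften f) x B)
          + (∑ B, Ften f x A B * divUpT (stfTensor c) x B)
          + (1/2) * pd A (fun y => ∑ B, ∑ D, ∑ b, ∑ d,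
              stfTensor c y B D * rndInv y B b * rndInv y D d * Ften f y b d) x
          - f x * (∑ b, ∑ e, rndInv x b e * cdT2 (fun y => Pten (stfTensor c) y) x e b A)
          - 3 * ∑ B, ∑ b, Pten (stfTensor c) x B A * rndInv x B b * pd b f x)) * aDen x =
      nonradiativeDensity pderiv invConfFactor confFactor Y c f x := by
  have h := invConfFactor_mul_confFactor_apply x
  have hpd (a : Fin 2) (g : SmoothFn) : 1 / 2 * pd a (fun y => 2 * g y) x = pderiv a g x := by
    simp [pd, pderiv_apply, fderiv_const_mul (differentiableAt_smoothFn g x)]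
  simp only [Ften_eq, sum_rndInv_stfTensor, hpd, divUpT_stfTensor, Pten_stfTensor,
    trace_cdT2_altTensor, aDen_eq, nonradiativeDensity]
  generalize confFactor • tfGrad pderiv (invConfFactor • grad pderiv f) = k
  generalize curlDiv pderiv invConfFactor c = p
  generalize invConfFactor ^ 2 * (c ⬝ᵥ k) = s
  generalize tfDiv pderiv k = u
  generalize tfDiv pderiv c = v
  simp [stfTensor, altTensor, rndInv_eq, contract, dirDeriv, rot, grad, dotProduct, pd_coe,
    smoothFn_ofNat_apply, -Derivation.leibniz]
  linear_combination
    (invConfFactor x * (Y 0 x * (c 0 x * u 0 x + c 1 x * u 1 x + k 0 x * v 0 x + k 1 x * v 1 x)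
        + Y 1 x * (c 1 x * u 0 x - c 0 x * u 1 x + k 1 x * v 0 x - k 0 x * v 1 x))
      + 3 * p x * (Y 0 x * pderiv 1 f x - Y 1 x * pderiv 0 f x)) * h

lemma setIntegral_nonradiativeDensity {U : Set Pt} (hU : IsOpen U) {Y : Fin 2 → SmoothFn}
    (hY : ∀ a, tfGrad pderiv Y a ∈ vanishingIdealOn U) {f : SmoothFn}
    (hfsupp : HasCompactSupport f) (hfU : tsupport f ⊆ U) (c : Fin 2 → SmoothFn) :
    ∫ x in U, nonradiativeDensity pderiv invConfFactor confFactor Y c f x =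
      -∫ x in U, f x * (c ⬝ᵥ tfGrad pderiv (invConfFactor •
        grad pderiv (metricDiv pderiv invConfFactor confFactor Y))) x := by
  set s := c ⬝ᵥ tfGrad pderiv (invConfFactor •
    grad pderiv (metricDiv pderiv invConfFactor confFactor Y))
  have hf : f ∈ vanishingIdealOn (tsupport f)ᶜ := fun x hx => image_eq_zero_of_notMem_tsupport hx
  have hfI : ∀ e ∈ vanishingIdealOn U, f * e = 0 := fun e he =>
    mul_eq_zero_of_mem_vanishingIdealOn (fun x hx => hf x fun h => hx (hfU h)) he
  have hdiff (a : Fin 2) (g : SmoothFn) (hg : g ∈ vanishingIdealOn (tsupport f)ᶜ) :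
      pderiv a g ∈ vanishingIdealOn (tsupport f)ᶜ :=
    pderiv_mem_vanishingIdealOn (isClosed_tsupport f).isOpen_compl a hg
  obtain ⟨V, hV, hdens⟩ := exists_nonradiativeDensity_eq_flatDiv_sub pderiv_comm
    invConfFactor_mul_confFactor flatDiv_confFactor_smul_grad
    (fun a _ => pderiv_mem_vanishingIdealOn hU a) hdiff hY hf hfI c
  have hdiv : flatDiv pderiv V ∈ vanishingIdealOn (tsupport f)ᶜ :=
    add_mem (hdiff 0 _ (hV 0)) (hdiff 1 _ (hV 1))
  have hfs : f * s ∈ vanishingIdealOn (tsupport f)ᶜ := Ideal.mul_mem_right s _ hf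
  have hset {g : SmoothFn} (hg : g ∈ vanishingIdealOn (tsupport f)ᶜ) :
      ∫ x in U, g x = ∫ x, g x :=
    setIntegral_eq_integral_of_forall_compl_eq_zero fun x hx => hg x fun h => hx (hfU h)
  calc ∫ x in U, nonradiativeDensity pderiv invConfFactor confFactor Y c f x
      = ∫ x, (flatDiv pderiv V - f * s) x := by rw [hdens, hset (sub_mem hdiv hfs)]
    _ = -∫ x, (f * s) x := by
      simp only [ContMDiffMap.coe_sub, Pi.sub_apply]
      rw [integral_sub (integrable_of_mem_vanishingIdealOn hfsupp hdiv)
        (integrable_of_mem_vanishingIdealOn hfsupp hfs), integral_flatDiv_eq_zero hfsupp hV,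
        zero_sub]
    _ = -∫ x in U, f x * s x := by rw [← hset hfs]; rfl

lemma exists_eq_stfTensor {C : Pt → Fin 2 → Fin 2 → ℝ}
    (hsmooth : ∀ a b, ContDiff ℝ ∞ (fun x => C x a b)) (hsymm : ∀ x a b, C x a b = C x b a)
    (htr : ∀ x, ∑ a, ∑ b, rndInv x a b * C x a b = 0) : ∃ c, C = stfTensor c := by
  refine ⟨![⟨_, (hsmooth 0 0).contMDiff⟩, ⟨_, (hsmooth 0 1).contMDiff⟩], ?_⟩
  ext x a b
  have hC11 : C x 1 1 = -C x 0 0 := by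
    have hlam := left_ne_zero_of_mul_eq_one (invConfFactor_mul_confFactor_apply x)
    have h := htr x
    simp only [rndInv_eq, Fin.sum_univ_two] at h
    refine mul_left_cancel₀ hlam ?_
    simp at h
    linear_combination h
  fin_cases a <;> fin_cases b
  exacts [rfl, rfl, hsymm x 1 0, hC11]

/-- for a conformal Killing field `Y^A` on an open set `U ⊆ S²`,
`f` smooth and compactly supported in `U`, and `C_{AB}` a smooth symmetric traceless
2-tensor on `S²`, with `F_{AB} = 2∇_A∇_B f - (Δf)σ_{AB}` and
`P_{BA} = ∇_B∇^E C_{EA} - ∇_A∇^E C_{EB}`: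
`¼∫_U Y^A [C_{AB}∇_D F^{BD} + F_{AB}∇_D C^{BD} + ½∇_A(C_{BD}F^{BD}) - f∇^B P_{BA}
  - 3P_{BA}∇^B f] = -¼ ∫_U f ∇^A∇^B(∇_C Y^C) C_{AB}`. -/
theorem conformalKilling_nonradiative_integral
    (U : Set Pt) (hU : IsOpen U)
    (Y : Pt → Fin 2 → ℝ) (hY : SmoothVec Y)
    (hCKE : ConformalKilling Y U)
    (f : Pt → ℝ) (hf : ContDiff ℝ (⊤ : ℕ∞) f)
    (hfsupp : HasCompactSupport f) (hfU : tsupport f ⊆ U)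
    (C : Pt → Fin 2 → Fin 2 → ℝ)
    (hCsmooth : ∀ a b, ContDiff ℝ (⊤ : ℕ∞) (fun x => C x a b))
    (hCsymm : ∀ x a b, C x a b = C x b a)
    (hCtr : ∀ x, ∑ a, ∑ b, rndInv x a b * C x a b = 0) :
    (1/4) * (∫ x in U,
        (∑ A, Y x A *
          ((∑ B, C x A B * divUpT (Ften f) x B)
            + (∑ B, Ften f x A B * divUpT C x B)
            + (1/2) * pd A (fun y => ∑ B, ∑ D, ∑ b, ∑ d,
                C y B D * rndInv y B b * rndInv y D d * Ften f y b d) x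
            - f x * (∑ b, ∑ c, rndInv x b c * cdT2 (fun y => Pten C y) x c b A)
            - 3 * ∑ B, ∑ b, Pten C x B A * rndInv x B b * pd b f x)) * aDen x)
      = -(1/4) * ∫ x in U,
          f x * (∑ A, ∑ B, ∑ a, ∑ b,
            rndInv x A a * rndInv x B b * hess (fun y => divg Y y) x a b * C x A B)
            * aDen x := by
  obtain ⟨c, rfl⟩ := exists_eq_stfTensor hCsmooth hCsymm hCtr
  obtain ⟨f, rfl⟩ : ∃ g : SmoothFn, f = g := ⟨⟨f, hf.contMDiff⟩, rfl⟩
  obtain ⟨Z, rfl⟩ : ∃ Z : Fin 2 → SmoothFn, Y = fun x a => Z a x :=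
    ⟨fun a => ⟨_, (hY a).contMDiff⟩, rfl⟩
  simp only [integrand_eq_nonradiativeDensity]
  simp only [divg_eq, aDen_eq, mul_assoc (f _), sum_rndInv_hess_stfTensor]
  rw [setIntegral_nonradiativeDensity hU (tfGrad_mem_vanishingIdealOn hCKE) hfsupp hfU]
  ring
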